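/- Let A be a matrix obtained from a normalized Hadamard matrix H of order ν by replacing every −1 entry with 0, and let x, y be two distinct columns of A other than the all-ones column. Then among the ν rows, each of the four patterns (0,0), (0,1), (1,0), (1,1) for (x_i, y_i) occurs exactly ν/4 times. -/

import Mathlib

open Finset

/-!
For signs `x, y ∈ {1, -1}`, the product `(1 + x) * (1 + y)` is `4` when `x = y = 1` and `0`
otherwise. Summed over the rows, it counts the pattern `(1, 1)` four times, while expanding it
leaves only the number of rows: the two columns sum to zero, being orthogonal to the all-ones
column, and they are orthogonal to each other. Since negating a column preserves all of these
relations, the other three patterns are equally frequent.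
-/

theorem neg_one_ne_one_of_charZero {R : Type*} [Ring R] [CharZero R] : (-1 : R) ≠ 1 :=
  Ring.neg_one_ne_one_of_char_ne_two (by simp [ringChar.eq_zero])

section SignVectors

variable {R : Type*} [Ring R] [CharZero R] [DecidableEq R]

theorem one_add_mul_one_add_eq_ite {x y : R} (hx : x = 1 ∨ x = -1) (hy : y = 1 ∨ y = -1) :
    (1 + x) * (1 + y) = if x = 1 ∧ y = 1 then 4 else 0 := by
  rcases hx with rfl | rfl <;> rcases hy with rfl | rfl <;> norm_num [neg_one_ne_one_of_charZero]

variable {ι : Type*} [Fintype ι] {x y : ι → R}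

theorem four_mul_card_filter_eq_one_and_eq_one
    (hx : ∀ i, x i = 1 ∨ x i = -1) (hy : ∀ i, y i = 1 ∨ y i = -1)
    (sum_x : ∑ i, x i = 0) (sum_y : ∑ i, y i = 0) (sum_xy : ∑ i, x i * y i = 0) :
    4 * #{i | x i = 1 ∧ y i = 1} = Fintype.card ι := by
  have cast_eq : (4 * #{i | x i = 1 ∧ y i = 1} : R) = Fintype.card ι := calc
    (4 * #{i | x i = 1 ∧ y i = 1} : R) = ∑ i, (1 + x i) * (1 + y i) := by
      simp only [natCast_card_filter, mul_sum, mul_ite, mul_one, mul_zero,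
        one_add_mul_one_add_eq_ite (hx _) (hy _)]
    _ = ∑ i, (1 + x i + y i + x i * y i) := by
      congr! 1 with i
      noncomm_ring
    _ = Fintype.card ι := by
      simp [sum_add_distrib, sum_x, sum_y, sum_xy]
  exact_mod_cast cast_eq

theorem four_mul_card_filter_eq_and_eq
    (hx : ∀ i, x i = 1 ∨ x i = -1) (hy : ∀ i, y i = 1 ∨ y i = -1)
    (sum_x : ∑ i, x i = 0) (sum_y : ∑ i, y i = 0) (sum_xy : ∑ i, x i * y i = 0)
    {s t : R} (hs : s = 1 ∨ s = -1) (ht : t = 1 ∨ t = -1) :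
    4 * #{i | x i = s ∧ y i = t} = Fintype.card ι := by
  have mul_eq_one_iff {s z : R} (hs : s = 1 ∨ s = -1) : s * z = 1 ↔ z = s := by
    rcases hs with rfl | rfl <;> simp [neg_eq_iff_eq_neg]
  have mul_sign {s z : R} (hs : s = 1 ∨ s = -1) (hz : z = 1 ∨ z = -1) :
      s * z = 1 ∨ s * z = -1 := by
    rcases hs with rfl | rfl <;> simpa [neg_eq_iff_eq_neg, or_comm] using hz
  have sum_mul_mul : ∑ i, s * x i * (t * y i) = 0 := by
    rcases hs with rfl | rfl <;> rcases ht with rfl | rfl <;> simp [sum_xy]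
  simpa only [mul_eq_one_iff hs, mul_eq_one_iff ht] using
    four_mul_card_filter_eq_one_and_eq_one (fun i => mul_sign hs (hx i))
      (fun i => mul_sign ht (hy i)) (by rw [← mul_sum, sum_x, mul_zero])
      (by rw [← mul_sum, sum_y, mul_zero]) sum_mul_mul

end SignVectors

theorem stmt_8_general {m n R : Type*} [Fintype m] [Ring R] [CharZero R] [DecidableEq R]
    {H A : Matrix m n R} (hentries : ∀ i c, H i c = 1 ∨ H i c = -1)
    (horth : ∀ c c', c ≠ c' → ∑ i, H i c * H i c' = 0)
    {c₀ : n} (hnormcol : ∀ i, H i c₀ = 1) (hA : ∀ i c, A i c = if H i c = 1 then 1 else 0)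
    {a b : n} (hab : a ≠ b)
    (ha : (fun i => A i a) ≠ fun _ => 1) (hb : (fun i => A i b) ≠ fun _ => 1) :
    4 * #{i | A i a = 0 ∧ A i b = 0} = Fintype.card m ∧
    4 * #{i | A i a = 0 ∧ A i b = 1} = Fintype.card m ∧
    4 * #{i | A i a = 1 ∧ A i b = 0} = Fintype.card m ∧
    4 * #{i | A i a = 1 ∧ A i b = 1} = Fintype.card m := by
  have sum_col {c : n} (hc : (fun i => A i c) ≠ fun _ => 1) : ∑ i, H i c = 0 := by
    have ne_c₀ : c ≠ c₀ := by
      rintro rfl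
      exact hc (funext fun i => by rw [hA, if_pos (hnormcol i)])
    simpa only [hnormcol, mul_one] using horth c c₀ ne_c₀
  have eq_one_iff (i : m) (c : n) : A i c = 1 ↔ H i c = 1 := by simp [hA]
  have eq_zero_iff (i : m) (c : n) : A i c = 0 ↔ H i c = -1 := by
    rcases hentries i c with h | h <;>
      simp [hA, h, neg_one_ne_one_of_charZero, neg_one_ne_one_of_charZero.symm]
  have card_eq {s t : R} := four_mul_card_filter_eq_and_eq (s := s) (t := t)
    (hentries · a) (hentries · b) (sum_col ha) (sum_col hb) (horth a b hab)
  simp only [eq_one_iff, eq_zero_iff]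
  exact ⟨card_eq (.inr rfl) (.inr rfl), card_eq (.inr rfl) (.inl rfl),
    card_eq (.inl rfl) (.inr rfl), card_eq (.inl rfl) (.inl rfl)⟩

theorem stmt_8 (ν : ℕ) (hν : 4 ≤ ν) (H : Matrix (Fin ν) (Fin ν) ℝ)
    (hentries : ∀ i c, H i c = 1 ∨ H i c = -1)
    (horth : ∀ c c' : Fin ν, c ≠ c' → ∑ i, H i c * H i c' = 0)
    (hnormrow : ∀ c, H ⟨0, by omega⟩ c = 1)
    (hnormcol : ∀ i, H i ⟨0, by omega⟩ = 1)
    (A : Matrix (Fin ν) (Fin ν) ℝ)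
    (hA : ∀ i c, A i c = if H i c = 1 then 1 else 0)
    (a b : Fin ν) (hab : a ≠ b)
    (ha : (fun i => A i a) ≠ fun _ => 1) (hb : (fun i => A i b) ≠ fun _ => 1) :
    (univ.filter fun i => A i a = 0 ∧ A i b = 0).card = ν / 4 ∧
    (univ.filter fun i => A i a = 0 ∧ A i b = 1).card = ν / 4 ∧
    (univ.filter fun i => A i a = 1 ∧ A i b = 0).card = ν / 4 ∧
    (univ.filter fun i => A i a = 1 ∧ A i b = 1).card = ν / 4 := by
  have four_mul_card := Fintype.card_fin ν ▸ stmt_8_general hentries horth hnormcol hA hab ha hb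
  omega
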